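/- arXiv:gr-qc/0010008 — 2 statements merged into one kernel-verified Lean document; each statement's English description precedes it below -/
import Mathlib

section
/- Subcritical phase (m(N) = O(1)): if μ₁ > log 6 then for every even m ≥ 2 the limit p_m = lim_{N→∞, N even} P_{N,μ₁}(m) exists, each p_m > 0, and Σ_{m even, m ≥ 2} p_m = 1; i.e. the boundary-length distribution converges to a probability distribution on the even integers ≥ 2. -/
open Filter Real MeasureTheory

/-- Number of rooted quasitriangulations of a sphere with a hole with `N` triangles and
`m` boundary edges (Goulden–Jackson), with `j = (N - m)/2`. -/
noncomputable def C0 (N m : ℕ) : ℝ :=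
  (2 : ℝ) ^ ((N - m) / 2 + 2) * (Nat.factorial (2 * m + 3 * ((N - m) / 2) - 1) : ℝ) *
    (Nat.factorial (2 * m - 3) : ℝ) /
    ((Nat.factorial ((N - m) / 2 + 1) : ℝ) * (Nat.factorial (2 * m + 2 * ((N - m) / 2)) : ℝ) *
      ((Nat.factorial (m - 2) : ℝ)) ^ 2)

/-- The filter "N → ∞ along even integers". -/
def evenAtTop : Filter ℕ := Filter.atTop ⊓ Filter.principal {N | Even N}
/-- Weight of boundary length m: w_{μ₁}(N,m) = exp(-μ₁ m/2) C₀(N,m). -/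
noncomputable def w (μ₁ : ℝ) (N m : ℕ) : ℝ := Real.exp (-μ₁ * m / 2) * C0 N m

/-- Normalizing constant Θ_N(μ₁) = Σ_{m even, 2 ≤ m ≤ N} w_{μ₁}(N,m). -/
noncomputable def Θ (μ₁ : ℝ) (N : ℕ) : ℝ :=
  ∑ m ∈ (Finset.range (N + 1)).filter (fun m => Even m ∧ 2 ≤ m), w μ₁ N m

/-- Boundary-length distribution P_{N,μ₁}(m) = w_{μ₁}(N,m)/Θ_N(μ₁). -/
noncomputable def P (μ₁ : ℝ) (N m : ℕ) : ℝ := w μ₁ N m / Θ μ₁ N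


lemma C0_form (k d : ℕ) : C0 (2 * (k + 1 + d)) (2 * (k + 1)) =
    (2 : ℝ) ^ (d + 2) * (Nat.factorial (4 * k + 3 + 3 * d) : ℝ) * (Nat.factorial (4 * k + 1) : ℝ) /
    ((Nat.factorial (d + 1) : ℝ) * (Nat.factorial (4 * k + 4 + 2 * d) : ℝ) *
      ((Nat.factorial (2 * k) : ℝ)) ^ 2) := by
  have h1 : (2 * (k + 1 + d) - 2 * (k + 1)) / 2 = d := by omega
  have h2 : 2 * (2 * (k + 1)) + 3 * d - 1 = 4 * k + 3 + 3 * d := by omega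
  have h3 : 2 * (2 * (k + 1)) - 3 = 4 * k + 1 := by omega
  have h4 : 2 * (2 * (k + 1)) + 2 * d = 4 * k + 4 + 2 * d := by omega
  have h5 : 2 * (k + 1) - 2 = 2 * k := by omega
  unfold C0
  rw [h1, h2, h3, h4, h5]

/-- the `k` part of the ratio -/
noncomputable def bb (k : ℕ) : ℝ :=
  (4 * k + 5) * (4 * k + 3) / ((k + 1) * (2 * k + 1))

/-- the `n` part of the ratio -/
noncomputable def aa (n k : ℕ) : ℝ :=
  (3 * n + k + 1) * (n - k) / ((2 * n + 2 * k + 3) * (2 * n + 2 * k + 4))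

lemma C0_step (n k : ℕ) (h : k + 2 ≤ n) :
    C0 (2 * n) (2 * (k + 1 + 1)) = aa n k * bb k * C0 (2 * n) (2 * (k + 1)) := by
  obtain ⟨d, rfl⟩ := Nat.exists_eq_add_of_le h
  have e1 : k + 2 + d = (k + 1) + 1 + d := by omega
  have e2 : k + 2 + d = k + 1 + (d + 1) := by omega
  have A := C0_form (k + 1) d
  have B := C0_form k (d + 1)
  rw [← e1] at A
  rw [← e2] at B
  rw [A, B]
  have f1 : 4 * k + 3 + 3 * (d + 1) = 4 * k + 6 + 3 * d := by ring
  have f2 : 4 * (k + 1) + 3 + 3 * d = 4 * k + 6 + 3 * d + 1 := by ring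
  have f3 : 4 * (k + 1) + 1 = 4 * k + 1 + 1 + 1 + 1 + 1 := by ring
  have f4 : 4 * (k + 1) + 4 + 2 * d = 4 * k + 6 + 2 * d + 1 + 1 := by ring
  have f5 : 4 * k + 4 + 2 * (d + 1) = 4 * k + 6 + 2 * d := by ring
  have f6 : 2 * (k + 1) = 2 * k + 1 + 1 := by ring
  rw [f1, f2, f3, f4, f5, f6]
  simp only [Nat.factorial_succ (4 * k + 6 + 3 * d), Nat.factorial_succ (4 * k + 1 + 1 + 1 + 1),
    Nat.factorial_succ (4 * k + 1 + 1 + 1), Nat.factorial_succ (4 * k + 1 + 1),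
    Nat.factorial_succ (4 * k + 1), Nat.factorial_succ (d + 1),
    Nat.factorial_succ (4 * k + 6 + 2 * d + 1), Nat.factorial_succ (4 * k + 6 + 2 * d),
    Nat.factorial_succ (2 * k + 1), Nat.factorial_succ (2 * k)]
  have p1 : (Nat.factorial (4 * k + 6 + 3 * d) : ℝ) ≠ 0 := by positivity
  have p2 : (Nat.factorial (4 * k + 1) : ℝ) ≠ 0 := by positivity
  have p3 : (Nat.factorial (d + 1) : ℝ) ≠ 0 := by positivity
  have p4 : (Nat.factorial (4 * k + 6 + 2 * d) : ℝ) ≠ 0 := by positivity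
  have p5 : (Nat.factorial (2 * k) : ℝ) ≠ 0 := by positivity
  generalize Nat.factorial (4 * k + 6 + 3 * d) = x1 at *
  generalize Nat.factorial (4 * k + 1) = x2 at *
  generalize Nat.factorial (d + 1) = x3 at *
  generalize Nat.factorial (4 * k + 6 + 2 * d) = x4 at *
  generalize Nat.factorial (2 * k) = x5 at *
  unfold aa bb
  push_cast
  have q1 : (2 * ((k : ℝ) + 2 + d) + 2 * k + 3) ≠ 0 := by positivity
  have q2 : (2 * ((k : ℝ) + 2 + d) + 2 * k + 4) ≠ 0 := by positivity
  have q3 : ((k : ℝ) + 1) ≠ 0 := by positivity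
  have q4 : (2 * (k : ℝ) + 1) ≠ 0 := by positivity
  have q5 : ((d : ℝ) + 1 + 1) ≠ 0 := by positivity
  have q6 : (4 * (k : ℝ) + 6 + 2 * d + 1 + 1) ≠ 0 := by positivity
  have q7 : (4 * (k : ℝ) + 6 + 2 * d + 1) ≠ 0 := by positivity
  have q8 : (2 * (k : ℝ) + 1 + 1) ≠ 0 := by positivity
  rw [div_mul_div_comm, div_mul_div_comm, div_eq_div_iff (by positivity) (by positivity)]
  ring

lemma C0_pos (N m : ℕ) : 0 < C0 N m := by unfold C0; positivity

lemma w_pos (μ : ℝ) (N m : ℕ) : 0 < w μ N m := mul_pos (exp_pos _) (C0_pos _ _)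

lemma w_step (μ : ℝ) (n k : ℕ) (h : k + 2 ≤ n) :
    w μ (2 * n) (2 * (k + 1 + 1)) = exp (-μ) * (aa n k * bb k) * w μ (2 * n) (2 * (k + 1)) := by
  unfold w
  rw [C0_step n k h]
  have : exp (-μ * ((2 * (k + 1 + 1) : ℕ) : ℝ) / 2)
      = exp (-μ) * exp (-μ * ((2 * (k + 1) : ℕ) : ℝ) / 2) := by
    rw [← exp_add]; congr 1; push_cast; ring
  rw [this]; ring

lemma bb_pos (k : ℕ) : 0 < bb k := by unfold bb; positivity

lemma aa_le (n k : ℕ) : aa n k ≤ 3 / 4 := by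
  unfold aa
  rw [div_le_div_iff₀ (by positivity) (by positivity)]
  have : (0 : ℝ) ≤ n := by positivity
  have : (0 : ℝ) ≤ k := by positivity
  have : (0 : ℝ) ≤ n * k := by positivity
  nlinarith [sq_nonneg (k : ℝ)]

lemma inv_lim (c : ℝ) : Tendsto (fun n : ℕ => c / (n : ℝ)) atTop (nhds 0) :=
  tendsto_const_div_atTop_nhds_zero_nat c

lemma aa_lim (k : ℕ) : Tendsto (fun n => aa n k) atTop (nhds (3 / 4)) := by
  have h : Tendsto (fun n : ℕ => (3 + ((k : ℝ) + 1) / n) * (1 - (k : ℝ) / n) /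
      ((2 + (2 * (k : ℝ) + 3) / n) * (2 + (2 * (k : ℝ) + 4) / n))) atTop
      (nhds ((3 + 0) * (1 - 0) / ((2 + 0) * (2 + 0)))) := by
    refine Tendsto.div ?_ ?_ (by norm_num)
    · exact (tendsto_const_nhds.add (inv_lim _)).mul (tendsto_const_nhds.sub (inv_lim _))
    · exact (tendsto_const_nhds.add (inv_lim _)).mul (tendsto_const_nhds.add (inv_lim _))
  norm_num at h
  refine h.congr' ?_
  filter_upwards [eventually_gt_atTop 0] with n hn
  have : (0 : ℝ) < n := by exact_mod_cast hn
  unfold aa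
  field_simp
  ring_nf

lemma bb_lim : Tendsto bb atTop (nhds 8) := by
  have h : Tendsto (fun n : ℕ => (4 + (5 : ℝ) / n) * (4 + (3 : ℝ) / n) /
      ((1 + (1 : ℝ) / n) * (2 + (1 : ℝ) / n))) atTop
      (nhds ((4 + 0) * (4 + 0) / ((1 + 0) * (2 + 0)))) := by
    refine Tendsto.div ?_ ?_ (by norm_num)
    · exact (tendsto_const_nhds.add (inv_lim _)).mul (tendsto_const_nhds.add (inv_lim _))
    · exact (tendsto_const_nhds.add (inv_lim _)).mul (tendsto_const_nhds.add (inv_lim _))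
  have e : ((4 + 0) * (4 + 0) / ((1 + 0) * (2 + 0)) : ℝ) = 8 := by norm_num
  rw [e] at h
  refine h.congr' ?_
  filter_upwards [eventually_gt_atTop 0] with n hn
  have : (0 : ℝ) < n := by exact_mod_cast hn
  unfold bb
  field_simp

/-- limiting relative weights -/
noncomputable def GG (μ : ℝ) : ℕ → ℝ
  | 0 => 1
  | k + 1 => exp (-μ) * (3 / 4 * bb k) * GG μ k

/-- relative weights -/
noncomputable def rr (μ : ℝ) (n k : ℕ) : ℝ :=
  if k + 1 ≤ n then w μ (2 * n) (2 * (k + 1)) / w μ (2 * n) 2 else 0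

lemma GG_pos (μ : ℝ) (k : ℕ) : 0 < GG μ k := by
  induction k with
  | zero => simp [GG]
  | succ k ih => rw [GG]; have := bb_pos k; positivity

lemma rr_nonneg (μ : ℝ) (n k : ℕ) : 0 ≤ rr μ n k := by
  unfold rr
  split_ifs
  · exact (div_pos (w_pos _ _ _) (w_pos _ _ _)).le
  · exact le_rfl

lemma rr_step (μ : ℝ) (n k : ℕ) (h : k + 2 ≤ n) :
    rr μ n (k + 1) = exp (-μ) * (aa n k * bb k) * rr μ n k := by
  unfold rr
  rw [if_pos (by omega), if_pos (by omega), w_step μ n k h]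
  ring

lemma rr_zero (μ : ℝ) (n : ℕ) (h : 1 ≤ n) : rr μ n 0 = 1 := by
  unfold rr
  rw [if_pos (by omega)]
  exact div_self (w_pos _ _ _).ne'

lemma rr_le (μ : ℝ) (n k : ℕ) : rr μ n k ≤ GG μ k := by
  induction k with
  | zero =>
    rcases Nat.lt_or_ge 0 n with h | h
    · rw [rr_zero μ n h]; simp [GG]
    · unfold rr; rw [if_neg (by omega)]; simp [GG]
  | succ k ih =>
    by_cases h : k + 2 ≤ n
    · rw [rr_step μ n k h, GG]
      have := bb_pos k
      have := aa_le n k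
      have := rr_nonneg μ n k
      gcongr
    · unfold rr; rw [if_neg (by omega)]; exact (GG_pos _ _).le

lemma rr_lim (μ : ℝ) (k : ℕ) : Tendsto (fun n => rr μ n k) atTop (nhds (GG μ k)) := by
  induction k with
  | zero =>
    refine tendsto_const_nhds.congr' ?_
    filter_upwards [eventually_ge_atTop 1] with n hn
    rw [rr_zero μ n hn]; simp [GG]
  | succ k ih =>
    have := ((((aa_lim k).mul_const (bb k)).const_mul (exp (-μ))).mul ih)
    refine this.congr' ?_
    filter_upwards [eventually_ge_atTop (k + 2)] with n hn
    rw [rr_step μ n k hn]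

lemma GG_summable (μ : ℝ) (hμ : Real.log 6 < μ) : Summable (GG μ) := by
  have hl : exp (-μ) * (3 / 4 * 8) < 1 := by
    have h6 : 6 < exp μ := by
      rwa [← Real.log_lt_iff_lt_exp (by norm_num)]
    rw [exp_neg, inv_mul_lt_iff₀ (exp_pos _)]
    linarith
  refine summable_of_ratio_test_tendsto_lt_one hl
    (Eventually.of_forall fun k => (GG_pos μ k).ne') ?_
  refine ((bb_lim.const_mul (3 / 4)).const_mul (exp (-μ))).congr ?_
  intro k
  rw [Real.norm_of_nonneg (GG_pos _ _).le, Real.norm_of_nonneg (GG_pos _ _).le,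
    eq_div_iff (GG_pos _ _).ne', GG]

lemma Theta_eq (μ : ℝ) (n : ℕ) :
    Θ μ (2 * n) = w μ (2 * n) 2 * ∑' k, rr μ n k := by
  rw [tsum_eq_sum (s := Finset.range n)
    (fun k hk => by unfold rr; rw [if_neg]; simpa using hk), Finset.mul_sum]
  unfold Θ
  symm
  refine Finset.sum_bij (fun k _ => 2 * (k + 1)) ?_ ?_ ?_ ?_
  · intro k hk
    simp only [Finset.mem_range, Finset.mem_filter] at *
    exact ⟨by omega, even_two_mul _, by omega⟩
  · intro a _ b _ h
    omega
  · intro m hm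
    simp only [Finset.mem_range, Finset.mem_filter] at hm
    obtain ⟨h1, ⟨c, hc⟩, h3⟩ := hm
    exact ⟨c - 1, by simp only [Finset.mem_range]; omega, by omega⟩
  · intro k hk
    simp only [Finset.mem_range] at hk
    unfold rr
    rw [if_pos (by omega), mul_div_cancel₀ _ (w_pos _ _ _).ne']

/-- Subcritical phase: the boundary-length distribution converges to a probability
distribution (p_m) on the even integers m ≥ 2, with every p_m > 0. -/
theorem subcritical_limit_law (μ₁ : ℝ) (hμ : Real.log 6 < μ₁) :
    ∃ p : ℕ → ℝ,
      (∀ m : ℕ, Even m → 2 ≤ m →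
        Filter.Tendsto (fun N : ℕ => P μ₁ N m) evenAtTop (nhds (p m)) ∧ 0 < p m) ∧
      ∑' k : ℕ, p (2 * (k + 1)) = 1 := by
  have hs := GG_summable μ₁ hμ
  have hS : 0 < ∑' k, GG μ₁ k := hs.tsum_pos (fun k => (GG_pos _ k).le) 0 (GG_pos _ 0)
  have hT : Tendsto (fun n => ∑' k, rr μ₁ n k) atTop (nhds (∑' k, GG μ₁ k)) := by
    refine tendsto_tsum_of_dominated_convergence hs (fun k => rr_lim μ₁ k) ?_
    refine Eventually.of_forall fun n k => ?_
    rw [Real.norm_of_nonneg (rr_nonneg _ _ _)]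
    exact rr_le _ _ _
  refine ⟨fun m => GG μ₁ (m / 2 - 1) / ∑' k, GG μ₁ k, ?_, ?_⟩
  · intro m hm h2
    obtain ⟨c, hc⟩ := hm
    obtain ⟨k, rfl⟩ : ∃ k, m = 2 * (k + 1) := ⟨c - 1, by omega⟩
    have e : 2 * (k + 1) / 2 - 1 = k := by omega
    simp only [e]
    refine ⟨?_, div_pos (GG_pos _ _) hS⟩
    have key : Tendsto (fun n => P μ₁ (2 * n) (2 * (k + 1))) atTop
        (nhds (GG μ₁ k / ∑' k, GG μ₁ k)) := by
      refine ((rr_lim μ₁ k).div hT hS.ne').congr' ?_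
      filter_upwards [eventually_ge_atTop (k + 1)] with n hn
      simp only [Pi.div_apply]
      unfold P
      rw [Theta_eq, ← div_div]
      congr 1
      unfold rr
      rw [if_pos hn]
    have hd : Tendsto (fun N : ℕ => N / 2) evenAtTop atTop :=
      (Nat.tendsto_div_const_atTop (by norm_num)).mono_left inf_le_left
    refine (key.comp hd).congr' ?_
    have hev : ∀ᶠ N in evenAtTop, Even N := by
      unfold evenAtTop
      exact mem_inf_of_right (mem_principal_self _)
    filter_upwards [hev] with N hN
    simp only [Function.comp]
    rw [Nat.two_mul_div_two_of_even hN]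
  · have e : ∀ k, 2 * (k + 1) / 2 - 1 = k := fun k => by omega
    simp only [e]
    rw [tsum_div_const, div_self hS.ne']
end

section
/- Tail of the subcritical limit law: if μ₁ > log 6 and p_m = lim_{N→∞, N even} P_{N,μ₁}(m) (m even, m ≥ 2), then the limits satisfy the recursion p_{m+2}/p_m = 6·exp(−μ₁)·(1 − 1/(4m²))/(1 − 1/m), and there exists a constant C ∈ (0,∞) such that p_m / (√m · (6·exp(−μ₁))^{m/2}) → C as m → ∞ along even integers. -/
open Filter Real MeasureTheory

lemma C0_eq (s j : ℕ) : C0 (s + 2 + 2 * j) (s + 2) =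
    (2:ℝ)^(j+2) * (Nat.factorial (2*s+3*j+3) : ℝ) * (Nat.factorial (2*s+1) : ℝ) /
    ((Nat.factorial (j+1) : ℝ) * (Nat.factorial (2*s+2*j+4) : ℝ) * (Nat.factorial s : ℝ)^2) := by
  have h1 : (s + 2 + 2 * j - (s+2)) / 2 = j := by omega
  unfold C0
  rw [h1, show 2 * (s+2) + 3 * j - 1 = 2*s+3*j+3 by omega, show 2 * (s+2) - 3 = 2*s+1 by omega,
    show 2*(s+2)+2*j = 2*s+2*j+4 by omega, show s + 2 - 2 = s by omega]

lemma C0_pos_s10 (s j : ℕ) : 0 < C0 (s + 2 + 2 * j) (s + 2) := by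
  rw [C0_eq]; positivity

/-- finite-j factor -/
noncomputable def Fj (m j : ℝ) : ℝ :=
  4 / 3 * ((2*m+3*(j+1)) * (j+2) / ((2*m+2*j+3)*(2*m+2*j+4)))

noncomputable def rho (m : ℝ) : ℝ := (1 - 1 / (4 * m ^ 2)) / (1 - 1 / m)

lemma C0_step_s10 (s j : ℕ) : C0 (s + 2 + 2 * (j+1)) (s + 2 + 2) =
    6 * Fj ((s:ℝ)+2) j * rho ((s:ℝ)+2) * C0 (s + 2 + 2 * (j+1)) (s + 2) := by
  have h : s + 2 + 2 * (j+1) = (s+2) + 2 + 2*j := by ring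
  rw [C0_eq s (j+1)]
  rw [h, C0_eq (s+2) j]
  rw [show 2*(s+2)+3*j+3 = (2*s+3*(j+1)+3)+1 by ring, show 2*(s+2)+2*j+4 = (2*s+2*(j+1)+4)+1+1 by ring]
  have hE : (2*(s+2)+1).factorial = (2*s+5)*((2*s+4)*((2*s+3)*((2*s+2)*(2*s+1).factorial))) := by
    rw [show 2*(s+2)+1 = 2*s+1+1+1+1+1 by ring]
    rw [Nat.factorial_succ, Nat.factorial_succ, Nat.factorial_succ, Nat.factorial_succ]
  rw [hE]
  simp only [Nat.factorial_succ (2*s+3*(j+1)+3),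
    Nat.factorial_succ (2*s+2*(j+1)+4), Nat.factorial_succ (2*s+2*(j+1)+4+1),
    Nat.factorial_succ s, Nat.factorial_succ (s+1), Nat.factorial_succ (j+1)]
  unfold Fj rho
  have e1 : (1 - 1 / ((s:ℝ)+2)) = (s+1)/(s+2) := by field_simp; ring
  rw [e1]
  have a1 := Nat.factorial_ne_zero s
  generalize (2*s+3*(j+1)+3).factorial = A
  have a2 := Nat.factorial_ne_zero (2*s+2*(j+1)+4)
  generalize (2*s+2*(j+1)+4).factorial = B at *
  have a3 := Nat.factorial_ne_zero (j+1)
  generalize (j+1).factorial = D at *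
  generalize (2*s+1).factorial = E at *
  generalize s.factorial = G at *
  push_cast
  have a1' : (G:ℝ) ≠ 0 := by exact_mod_cast a1
  have a2' : (B:ℝ) ≠ 0 := by exact_mod_cast a2
  have a3' : (D:ℝ) ≠ 0 := by exact_mod_cast a3
  field_simp
  ring

lemma Fj_le (s j : ℕ) : Fj ((s:ℝ)+2) j ≤ 1 := by
  unfold Fj
  rw [← mul_div_assoc, div_le_one (by positivity)]
  have : (0:ℝ) ≤ s := by positivity
  have : (0:ℝ) ≤ j := by positivity
  have : (0:ℝ) ≤ s * j := by positivity
  have : (0:ℝ) ≤ s * s := by positivity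
  nlinarith

lemma Fj_tendsto (m : ℝ) : Tendsto (fun j : ℕ => Fj m j) atTop (nhds 1) := by
  have key : ∀ a b : ℝ, Tendsto (fun j : ℕ => (a * (j:ℝ) + b) / j) atTop (nhds a) := by
    intro a b
    have h := (tendsto_const_div_atTop_nhds_zero_nat b).const_add a
    rw [add_zero] at h
    refine h.congr' ?_
    filter_upwards [eventually_gt_atTop 0] with j hj
    have : (j:ℝ) ≠ 0 := by positivity
    field_simp
  have h := ((((key 3 (2*m+3)).mul (key 1 2)).div ((key 2 (2*m+3)).mul (key 2 (2*m+4)))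
    (by norm_num)).const_mul (4/3))
  norm_num at h
  refine h.congr' ?_
  filter_upwards [eventually_gt_atTop 0] with j hj
  have : (j:ℝ) ≠ 0 := by positivity
  unfold Fj
  have e : ∀ a b c d n : ℝ, n ≠ 0 → a / n * (b / n) / (c / n * (d/n)) = a * b / (c * d) := by
    intro a b c d n hn
    rw [div_mul_div_comm, div_mul_div_comm, div_div_div_cancel_right₀ (by positivity)]
  rw [e _ _ _ _ _ this]
  ring_nf

lemma rho_pos (s : ℕ) : 0 < rho ((s:ℝ)+2) := by
  have e1 : (1 - 1 / ((s:ℝ)+2)) = (s+1)/(s+2) := by field_simp; ring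
  have e2 : (1 - 1 / (4 * ((s:ℝ)+2)^2)) = (4*s^2+16*s+15)/(4*(s+2)^2) := by field_simp; ring
  unfold rho
  rw [e1, e2]; positivity

lemma w_pos_s10 (μ : ℝ) (s j : ℕ) : 0 < w μ (s + 2 + 2 * j) (s + 2) :=
  mul_pos (exp_pos _) (C0_pos_s10 s j)

lemma w_step_s10 (μ : ℝ) (s j : ℕ) : w μ (s + 2 + 2 * (j+1)) (s + 2 + 2) =
    Fj ((s:ℝ)+2) j * (6 * exp (-μ) * rho ((s:ℝ)+2)) * w μ (s + 2 + 2 * (j+1)) (s + 2) := by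
  unfold w
  rw [C0_step_s10]
  have : exp (-μ * ((s+2+2:ℕ):ℝ) / 2) = exp (-μ) * exp (-μ * ((s+2:ℕ):ℝ) / 2) := by
    rw [← exp_add]; congr 1; push_cast; ring
  rw [this]; ring

/-- the product sequence -/
noncomputable def qs (x : ℝ) : ℕ → ℝ
  | 0 => 1
  | k+1 => x * rho (((2*k:ℕ):ℝ)+2) * qs x k

lemma qs_pos {x : ℝ} (hx : 0 < x) (k : ℕ) : 0 < qs x k := by
  induction k with
  | zero => simp [qs]
  | succ k ih => exact mul_pos (mul_pos hx (rho_pos _)) ih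

lemma rho_tendsto : Tendsto (fun k : ℕ => rho (((2*k:ℕ):ℝ)+2)) atTop (nhds 1) := by
  have h0 : Tendsto (fun k : ℕ => (((2*k:ℕ):ℝ)+2)) atTop atTop := by
    apply tendsto_atTop_add_const_right
    exact tendsto_natCast_atTop_atTop.comp
      (tendsto_atTop_mono (fun n => by simp; omega) tendsto_id)
  have h1 := tendsto_inv_atTop_zero.comp h0
  have h2 := (((h1.pow 2).const_mul (1/4)).const_sub 1).div (h1.const_sub 1) (by norm_num)
  norm_num at h2
  refine h2.congr fun k => ?_
  simp only [rho, Function.comp, Pi.div_apply]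
  congr 2
  · push_cast; field_simp
  · push_cast; field_simp

lemma qs_summable {x : ℝ} (hx : 0 < x) (hx1 : x < 1) : Summable (qs x) := by
  refine summable_of_ratio_test_tendsto_lt_one hx1
    (Eventually.of_forall fun k => (qs_pos hx k).ne') ?_
  have := rho_tendsto.const_mul x
  rw [mul_one] at this
  refine this.congr fun k => ?_
  have h1 := qs_pos hx k
  have h2 := qs_pos hx (k+1)
  rw [Real.norm_of_nonneg h1.le, Real.norm_of_nonneg h2.le]
  simp only [qs]
  field_simp

lemma w_le (μ : ℝ) (M k : ℕ) (hk : k ≤ M) :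
    w μ (2 * M + 2) (2 * k + 2) ≤ qs (6 * exp (-μ)) k * w μ (2 * M + 2) 2 := by
  induction k with
  | zero => simp [qs]
  | succ k ih =>
    obtain ⟨j, rfl⟩ : ∃ j, M = k + j + 1 := ⟨M - k - 1, by omega⟩
    have h := w_step_s10 μ (2*k) j
    have hw := w_pos_s10 μ (2*k) (j+1)
    rw [show 2 * k + 2 + 2 * (j+1) = 2 * (k+j+1) + 2 by ring] at h hw
    rw [show 2 * (k+1) + 2 = 2 * k + 2 + 2 by ring, h]
    have ih := ih (by omega)
    have hr := rho_pos (2*k)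
    have hF := Fj_le (2*k) j
    have hx : 0 < 6 * exp (-μ) * rho (((2*k:ℕ):ℝ)+2) := mul_pos (by positivity) hr
    simp only [qs]
    calc _ ≤ 1 * (6 * exp (-μ) * rho (((2*k:ℕ):ℝ)+2)) * w μ (2 * (k+j+1) + 2) (2*k+2) := by
            gcongr
      _ ≤ 1 * (6 * exp (-μ) * rho (((2*k:ℕ):ℝ)+2)) *
          (qs (6 * exp (-μ)) k * w μ (2 * (k+j+1) + 2) 2) := by gcongr
      _ = _ := by ring

lemma Θ_eq (μ : ℝ) (M : ℕ) : Θ μ (2 * M + 2) =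
    ∑ k ∈ Finset.range (M+1), w μ (2 * M + 2) (2 * k + 2) := by
  unfold Θ
  symm
  refine Finset.sum_bij (fun k _ => 2 * k + 2) ?_ ?_ ?_ ?_
  · intro k hk
    simp only [Finset.mem_range, Finset.mem_filter] at *
    exact ⟨by omega, ⟨k+1, by ring⟩, by omega⟩
  · intro a _ b _ h; omega
  · intro b hb
    simp only [Finset.mem_range, Finset.mem_filter] at *
    obtain ⟨h1, ⟨c, rfl⟩, h3⟩ := hb
    exact ⟨c - 1, by omega, by omega⟩
  · intros; rfl

lemma P_two_ge (μ : ℝ) (hμ : Real.log 6 < μ) (M : ℕ) :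
    (∑' k, qs (6 * exp (-μ)) k)⁻¹ ≤ P μ (2 * M + 2) 2 := by
  have hx : 0 < 6 * exp (-μ) := by positivity
  have hx1 : 6 * exp (-μ) < 1 := by
    rw [exp_neg, ← div_eq_mul_inv, div_lt_one (exp_pos _)]
    exact (Real.log_lt_iff_lt_exp (by norm_num)).1 hμ
  have hs := qs_summable hx hx1
  have hw : 0 < w μ (2*M+2) 2 := by
    have := w_pos_s10 μ 0 M
    rwa [show 0 + 2 + 2 * M = 2*M+2 by ring] at this
  have hΘ : Θ μ (2*M+2) ≤ (∑' k, qs (6 * exp (-μ)) k) * w μ (2*M+2) 2 := by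
    rw [Θ_eq]
    calc _ ≤ ∑ k ∈ Finset.range (M+1), qs (6 * exp (-μ)) k * w μ (2*M+2) 2 :=
          Finset.sum_le_sum fun k hk => w_le μ M k (by simp at hk; omega)
      _ = (∑ k ∈ Finset.range (M+1), qs (6 * exp (-μ)) k) * w μ (2*M+2) 2 := by
          rw [Finset.sum_mul]
      _ ≤ _ := by
          gcongr
          exact hs.sum_le_tsum _ fun k _ => (qs_pos hx k).le
  have hΘ0 : 0 < Θ μ (2*M+2) := by
    rw [Θ_eq]
    refine Finset.sum_pos (fun k hk => ?_) ⟨0, by simp⟩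
    obtain ⟨j, rfl⟩ : ∃ j, M = k + j := ⟨M - k, by simp at hk; omega⟩
    have := w_pos_s10 μ (2*k) j
    rwa [show 2 * k + 2 + 2 * j = 2*(k+j)+2 by ring] at this
  have hS : 0 < ∑' k, qs (6 * exp (-μ)) k := by
    by_contra hc
    push Not at hc
    nlinarith [mul_nonneg (neg_nonneg.2 hc) hw.le]
  unfold P
  rw [le_div_iff₀ hΘ0, inv_mul_le_iff₀ hS]
  exact hΘ

lemma rho_sq_lower (n : ℝ) (hn : 1 ≤ n) : (n + 1) / n ≤ rho (2*n) ^ 2 := by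
  have e : rho (2*n) = (16*n^2-1)/(8*n*(2*n-1)) := by
    have : 2*n-1 ≠ 0 := by linarith
    have e1 : (1 - 1 / (2*n)) = (2*n-1)/(2*n) := by field_simp
    unfold rho; rw [e1]; field_simp; ring
  rw [e, div_pow, div_le_div_iff₀ (by linarith) (by
    have : 0 < 2*n-1 := by linarith
    positivity)]
  have : 0 ≤ n * (160*n^2-64*n+1) := mul_nonneg (by linarith) (by nlinarith)
  nlinarith

lemma rho_sq_upper (n : ℝ) (hn : 1 ≤ n) :
    rho (2*n) ^ 2 * (n + 8) / (n+1) ^ 2 ≤ (n+7) / n ^ 2 := by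
  have h0 : 0 < 2*n-1 := by linarith
  have e : rho (2*n) = (16*n^2-1)/(8*n*(2*n-1)) := by
    have e1 : (1 - 1 / (2*n)) = (2*n-1)/(2*n) := by field_simp
    unfold rho; rw [e1]; field_simp; ring
  rw [e, div_pow, div_mul_eq_mul_div, div_div, div_le_div_iff₀ (by positivity) (by positivity)]
  obtain ⟨t, rfl⟩ : ∃ t, n = 1 + t := ⟨n - 1, by ring⟩
  have ht : 0 ≤ t := by linarith
  rw [← sub_nonneg]
  ring_nf
  positivity

lemma a_tendsto (a : ℕ → ℝ) (ha0 : ∀ k, 0 < a k)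
    (ha : ∀ k : ℕ, a (k+1) = rho (2 * ((k:ℝ)+1)) * √(((k:ℝ)+1) / (k+2)) * a k) :
    ∃ C : ℝ, 0 < C ∧ Tendsto a atTop (nhds C) := by
  have hsq : ∀ k : ℕ, a (k+1) ^ 2 = rho (2 * ((k:ℝ)+1)) ^ 2 * (((k:ℝ)+1) / (k+2)) * a k ^ 2 := by
    intro k
    rw [ha, mul_pow, mul_pow, Real.sq_sqrt (by positivity)]
  have hmono : Monotone a := by
    refine monotone_nat_of_le_succ fun k => ?_
    refine (sq_le_sq₀ (ha0 k).le (ha0 _).le).1 ?_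
    rw [hsq]
    have h := rho_sq_lower ((k:ℝ)+1) (by linarith [Nat.cast_nonneg (α := ℝ) k])
    have : 1 ≤ rho (2 * ((k:ℝ)+1)) ^ 2 * (((k:ℝ)+1) / (k+2)) := by
      rw [div_le_iff₀ (by positivity)] at h
      rw [← mul_div_assoc, le_div_iff₀ (by positivity)]
      linarith
    nlinarith [sq_nonneg (a k)]
  have hanti : Antitone fun k : ℕ => a k ^ 2 * (((k:ℝ)+8) / (k+1)) := by
    refine antitone_nat_of_succ_le fun k => ?_
    rw [hsq]
    have h := rho_sq_upper ((k:ℝ)+1) (by linarith [Nat.cast_nonneg (α := ℝ) k])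
    push_cast
    have h2 : rho (2 * ((k:ℝ)+1)) ^ 2 * (((k:ℝ)+1) / (k+2)) * (((k:ℝ)+1+8)/(k+1+1)) ≤
        ((k:ℝ)+8)/(k+1) := by
      calc _ = (k+1) * (rho (2 * ((k:ℝ)+1)) ^ 2 * (k+1+8) / (k+1+1)^2) := by
            field_simp; ring
        _ ≤ (k+1) * (((k:ℝ)+1+7)/(k+1)^2) := by gcongr
        _ = _ := by field_simp; ring
    nlinarith [mul_le_mul_of_nonneg_left h2 (sq_nonneg (a k))]
  have hb : ∀ k, a k ≤ 3 * a 0 := by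
    intro k
    refine (sq_le_sq₀ (ha0 k).le (by linarith [ha0 0])).1 ?_
    have h := hanti (Nat.zero_le k)
    simp only [] at h
    norm_num at h
    have : 1 ≤ ((k:ℝ)+8) / (k+1) := by rw [le_div_iff₀ (by positivity)]; linarith
    nlinarith [mul_le_mul_of_nonneg_left this (sq_nonneg (a k)), sq_nonneg (a 0)]
  have hbdd : BddAbove (Set.range a) := ⟨3 * a 0, by rintro _ ⟨k, rfl⟩; exact hb k⟩
  exact ⟨_, (ha0 0).trans_le (le_ciSup hbdd 0), tendsto_atTop_ciSup hmono hbdd⟩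

lemma seq_tendsto (s : ℕ) : Tendsto (fun j : ℕ => 2 * s + 2 + 2 * (j+1)) atTop evenAtTop := by
  unfold evenAtTop
  refine tendsto_inf.2 ⟨tendsto_atTop_mono (fun n => by simp; omega) tendsto_id, ?_⟩
  exact tendsto_principal.2 (Eventually.of_forall fun j => ⟨s+1+(j+1), by ring⟩)

/-- Tail of the subcritical limit law: the limits p_m satisfy the explicit recursion and
p_m ~ C √m (6 exp(-μ₁))^{m/2} as m → ∞ along even integers. -/
theorem subcritical_tail (μ₁ : ℝ) (hμ : Real.log 6 < μ₁) (p : ℕ → ℝ)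
    (hp : ∀ m : ℕ, Even m → 2 ≤ m →
      Filter.Tendsto (fun N : ℕ => P μ₁ N m) evenAtTop (nhds (p m))) :
    (∀ m : ℕ, Even m → 2 ≤ m →
      p (m + 2) / p m =
        6 * Real.exp (-μ₁) * ((1 - 1 / (4 * (m : ℝ) ^ 2)) / (1 - 1 / (m : ℝ)))) ∧
    ∃ C : ℝ, 0 < C ∧
      Filter.Tendsto
        (fun k : ℕ => p (2 * (k + 1)) /
          (Real.sqrt ((2 * (k + 1) : ℕ) : ℝ) * (6 * Real.exp (-μ₁)) ^ (k + 1)))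
        Filter.atTop (nhds C) := by
  set x := 6 * Real.exp (-μ₁) with hx
  have hx0 : 0 < x := by positivity
  have hs : 0 < (∑' k, qs x k)⁻¹ := by
    have hx1 : x < 1 := by
      rw [hx, exp_neg, ← div_eq_mul_inv, div_lt_one (exp_pos _)]
      exact (Real.log_lt_iff_lt_exp (by norm_num)).1 hμ
    exact inv_pos.2 ((qs_summable hx0 hx1).tsum_pos (fun k => (qs_pos hx0 k).le) 0 (qs_pos hx0 0))
  have hp2 : 0 < p 2 := by
    refine hs.trans_le (ge_of_tendsto' ((hp 2 (by decide) le_rfl).comp (seq_tendsto 0)) fun j => ?_)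
    have := P_two_ge μ₁ hμ (j+1)
    simp only [Function.comp]
    rwa [show 2 * 0 + 2 + 2 * (j+1) = 2 * (j+1) + 2 by ring]
  have hstep : ∀ k : ℕ, p (2*k+2+2) = x * rho (((2*k:ℕ):ℝ)+2) * p (2*k+2) := by
    intro k
    have h1 := (hp (2*k+2+2) ⟨k+2, by ring⟩ (by omega)).comp (seq_tendsto k)
    have h2 := (hp (2*k+2) ⟨k+1, by ring⟩ (by omega)).comp (seq_tendsto k)
    have h3 := ((Fj_tendsto (((2*k:ℕ):ℝ)+2)).mul_const (x * rho (((2*k:ℕ):ℝ)+2))).mul h2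
    rw [one_mul] at h3
    refine tendsto_nhds_unique h1 (h3.congr fun j => ?_)
    simp only [Function.comp, P]
    rw [w_step_s10 μ₁ (2*k) j]
    ring
  have hpos : ∀ k : ℕ, 0 < p (2*k+2) := by
    intro k
    induction k with
    | zero => simpa using hp2
    | succ k ih =>
      rw [show 2*(k+1)+2 = 2*k+2+2 by ring, hstep]
      exact mul_pos (mul_pos hx0 (rho_pos _)) ih
  constructor
  · intro m hm h2
    obtain ⟨k, rfl⟩ : ∃ k, m = 2*k+2 := by
      obtain ⟨c, rfl⟩ := hm
      exact ⟨c-1, by omega⟩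
    rw [hstep, mul_div_assoc, div_self (hpos k).ne', mul_one]
    unfold rho
    push_cast
    rfl
  · refine a_tendsto _ (fun k => ?_) (fun k => ?_)
    · have := hpos k
      rw [show 2*(k+1) = 2*k+2 by ring]
      positivity
    · have h := hstep k
      rw [show 2*(k+1+1) = 2*k+2+2 by ring, show 2*(k+1) = 2*k+2 by ring, h]
      have e1 : ((2*k+2+2:ℕ):ℝ) = 2 * ((k:ℝ)+2) := by push_cast; ring
      have e2 : ((2*k+2:ℕ):ℝ) = 2 * ((k:ℝ)+1) := by push_cast; ring
      have e3 : ((2*k:ℕ):ℝ)+2 = 2 * ((k:ℝ)+1) := by push_cast; ring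
      rw [e1, e2, e3, Real.sqrt_div (by positivity), Real.sqrt_mul (by norm_num),
        Real.sqrt_mul (by norm_num)]
      have : 0 < √((k:ℝ)+1) := by positivity
      have : 0 < √((k:ℝ)+2) := by positivity
      field_simp
      ring
end
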